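/- arXiv:2303.02991 — 2 statements merged into one kernel-verified Lean document; each statement's English description precedes it below -/
import Mathlib

section
/- Let X_0 and X_1 be real Banach spaces and ι : X_1 → X_0 a compact bounded linear operator. Fix κ ∈ [0, 1/2), L > 0, and let N be a natural number such that the image under ι of the closed unit ball of X_1 can be covered by N balls of radius (1−2κ)/(4L) in X_0. Let 𝔹 ⊆ X_0 and let U : 𝔹 → X_0 be an admissible map, i.e. U = ι∘C + 𝓛 where C : 𝔹 → X_1 satisfies ‖C ξ_1 − C ξ_2‖_{X_1} ≤ L‖ξ_1 − ξ_2‖_{X_0} and 𝓛 : 𝔹 → X_0 satisfies ‖𝓛 ξ_1 − 𝓛 ξ_2‖_{X_0} ≤ κ‖ξ_1 − ξ_2‖_{X_0} for all ξ_1, ξ_2 ∈ 𝔹. Then for every subset S ⊆ 𝔹, every R' > 0, and every finite set V ⊆ 𝔹 such that every point of S lies within distance R' (in X_0) of V, there exists a finite set V' ⊆ U(S) with card V' ≤ N · card V such that every point of U(S) lies within distance (κ + 1/2)·R' (in X_0) of V'. -/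
/-!
Cut `S` into the pieces `S ∩ closedBall v R'` with `v ∈ V`. On such a piece `𝓛` stays within
`κ R'` of `𝓛 v`, and `C` takes values in the ball of radius `L R'` about `C v`, whose image under
`ι` is a rescaled translate of the image of the unit ball. Hence `N` balls of radius
`κ R' + L R' (1 - 2κ) / (4L) = (κ + 1/2) R' / 2` cover the image of the piece. Their centres need
not lie in `U '' S`; replacing each centre by a point of `U '' S` doubles the radius.
-/

open Metric Set
open scoped NNReal Pointwise

section CoveringNumber

variable {X Y : Type*}

section PseudoEMetricSpace

variable [PseudoEMetricSpace X] [PseudoEMetricSpace Y] {ε δ : ℝ≥0} {A B : Set X}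

theorem isCover_trans {N : Set X} (hAB : IsCover δ A B) (hBN : IsCover ε B N) :
    IsCover (δ + ε) A N := by
  intro x hx
  obtain ⟨y, hy, hxy⟩ := hAB hx
  obtain ⟨z, hz, hyz⟩ := hBN hy
  refine ⟨z, hz, (edist_triangle x y z).trans ?_⟩
  simpa using add_le_add hxy hyz

theorem isCover_biUnion {α : Type*} {t : Set α} {A N : α → Set X}
    (h : ∀ i ∈ t, IsCover ε (A i) (N i)) : IsCover ε (⋃ i ∈ t, A i) (⋃ i ∈ t, N i) := by
  intro x hx
  obtain ⟨i, hi, hxi⟩ := mem_iUnion₂.1 hx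
  obtain ⟨y, hy, hxy⟩ := h i hi hxi
  exact ⟨y, mem_biUnion hi hy, hxy⟩

theorem exists_isCover_encard_eq_externalCoveringNumber (ε : ℝ≥0) (A : Set X) :
    ∃ N, IsCover ε A N ∧ N.encard = externalCoveringNumber ε A := by
  have : Nonempty {N : Set X // IsCover ε A N} := ⟨⟨A, .rfl⟩⟩
  obtain ⟨⟨N, hN⟩, hcard⟩ :=
    ENat.exists_eq_iInf fun N : {N : Set X // IsCover ε A N} ↦ N.1.encard
  exact ⟨N, hN, hcard.trans iInf_subtype⟩

theorem externalCoveringNumber_add_le_of_isCover (hAB : IsCover δ A B) :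
    externalCoveringNumber (δ + ε) A ≤ externalCoveringNumber ε B := by
  obtain ⟨N, hN, hcard⟩ := exists_isCover_encard_eq_externalCoveringNumber ε B
  exact hcard ▸ (isCover_trans hAB hN).externalCoveringNumber_le_encard

theorem externalCoveringNumber_biUnion_le {α : Type*} (t : Finset α) (A : α → Set X) :
    externalCoveringNumber ε (⋃ i ∈ t, A i) ≤ ∑ i ∈ t, externalCoveringNumber ε (A i) := by
  choose N hN hcard using fun i ↦ exists_isCover_encard_eq_externalCoveringNumber ε (A i)
  calc externalCoveringNumber ε (⋃ i ∈ t, A i)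
    _ ≤ (⋃ i ∈ t, N i).encard :=
      (isCover_biUnion (t := (t : Set α)) fun i _ ↦ hN i).externalCoveringNumber_le_encard
    _ ≤ ∑ i ∈ t, (N i).encard := t.set_encard_biUnion_le N
    _ = ∑ i ∈ t, externalCoveringNumber ε (A i) := by simp only [hcard]

theorem externalCoveringNumber_image_le_of_lipschitzWith {K : ℝ≥0} {f : X → Y}
    (hf : LipschitzWith K f) (ε : ℝ≥0) (A : Set X) :
    externalCoveringNumber (K * ε) (f '' A) ≤ externalCoveringNumber ε A := by
  obtain ⟨N, hN, hcard⟩ := exists_isCover_encard_eq_externalCoveringNumber ε A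
  calc externalCoveringNumber (K * ε) (f '' A)
    _ ≤ (f '' N).encard := (hN.image_lipschitz hf).externalCoveringNumber_le_encard
    _ ≤ N.encard := encard_image_le f N
    _ = externalCoveringNumber ε A := hcard

end PseudoEMetricSpace

section PseudoMetricSpace

variable [PseudoMetricSpace X] {ε : ℝ≥0} {A : Set X}

theorem isCover_iff_forall_exists_dist_le {N : Set X} :
    IsCover ε A N ↔ ∀ x ∈ A, ∃ y ∈ N, dist x y ≤ ε := by
  simp [isCover_iff_subset_iUnion_closedBall, subset_def]

theorem externalCoveringNumber_le_card_of_subset_iUnion_closedBall {α : Type*} {y : α → X}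
    (h : A ⊆ ⋃ i, closedBall (y i) ε) : externalCoveringNumber ε A ≤ ENat.card α := by
  have hcover : IsCover ε A (range y) :=
    isCover_iff_subset_iUnion_closedBall.2 (by rwa [biUnion_range])
  calc externalCoveringNumber ε A
    _ ≤ (range y).encard := hcover.externalCoveringNumber_le_encard
    _ ≤ (univ : Set α).encard := image_univ ▸ encard_image_le y univ
    _ = ENat.card α := encard_univ α

end PseudoMetricSpace

end CoveringNumber

section LinearImage

variable {E F : Type*} [NormedAddCommGroup E] [NormedSpace ℝ E]
  [SeminormedAddCommGroup F] [NormedSpace ℝ F]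

theorem image_closedBall_eq_image_image_unitClosedBall (ι : E →ₗ[ℝ] F) (c : E) (r : ℝ≥0) :
    ι '' closedBall c r = (fun z ↦ ι c + r • z) '' (ι '' closedBall 0 1) := by
  rw [← affinity_unitClosedBall r.coe_nonneg c, ← image_vadd, ← image_smul]
  simp only [image_image, vadd_eq_add, map_add, map_smul, NNReal.smul_def]

theorem externalCoveringNumber_image_closedBall_le (ι : E →ₗ[ℝ] F) (c : E) (r ε : ℝ≥0) :
    externalCoveringNumber (r * ε) (ι '' closedBall c r) ≤
      externalCoveringNumber ε (ι '' closedBall 0 1) := by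
  have hlip : LipschitzWith r fun z : F ↦ ι c + r • z := by
    simpa [Function.comp_def, NNReal.smul_def] using
      (isometry_add_left (ι c)).lipschitz.comp (lipschitzWith_smul (r : ℝ))
  rw [image_closedBall_eq_image_image_unitClosedBall]
  exact externalCoveringNumber_image_le_of_lipschitzWith hlip ε _

end LinearImage

section Admissible

variable {X E F : Type*} [PseudoMetricSpace X] [NormedAddCommGroup E] [NormedSpace ℝ E]
  [SeminormedAddCommGroup F] [NormedSpace ℝ F]

/-- `U` is an admissible map on `𝔹`: there it is the sum of `ι ∘ C` and `𝓛`, where `C` is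
`L`-Lipschitz with values in the domain of `ι`, and `𝓛` is `κ`-Lipschitz. The domain of `U` need
not be the space where it takes its values, and `U`, `C`, `𝓛` are unconstrained off `𝔹`. -/
def IsAdmissibleOn (ι : E →ₗ[ℝ] F) (L κ : ℝ≥0) (𝔹 : Set X) (U : X → F) : Prop :=
  ∃ (C : X → E) (𝓛 : X → F), LipschitzOnWith L C 𝔹 ∧ LipschitzOnWith κ 𝓛 𝔹 ∧
    ∀ x ∈ 𝔹, U x = ι (C x) + 𝓛 x

namespace IsAdmissibleOn

variable {ι : E →ₗ[ℝ] F} {L κ R : ℝ≥0} {𝔹 S : Set X} {U : X → F}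

theorem externalCoveringNumber_image_le_of_subset_closedBall (hU : IsAdmissibleOn ι L κ 𝔹 U)
    (ε : ℝ≥0) {v : X} (hS : S ⊆ 𝔹) (hv : v ∈ 𝔹) (hSv : S ⊆ closedBall v R) :
    externalCoveringNumber ((κ + L * ε) * R) (U '' S) ≤
      externalCoveringNumber ε (ι '' closedBall 0 1) := by
  obtain ⟨C, 𝓛, hC, h𝓛, hUeq⟩ := hU
  have hcover : IsCover (κ * R) (U '' S) ((· + 𝓛 v) '' (ι '' closedBall (C v) ↑(L * R))) := by
    rw [isCover_iff_forall_exists_dist_le]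
    rintro _ ⟨x, hx, rfl⟩
    have hxv : dist x v ≤ R := hSv hx
    have hCx : dist (C x) (C v) ≤ L * R := by grw [hC.dist_le_mul x (hS hx) v hv, hxv]
    have h𝓛x : dist (𝓛 x) (𝓛 v) ≤ κ * R := by grw [h𝓛.dist_le_mul x (hS hx) v hv, hxv]
    refine ⟨ι (C x) + 𝓛 v, mem_image_of_mem _ (mem_image_of_mem _ hCx), ?_⟩
    rwa [hUeq x (hS hx), dist_add_left]
  calc externalCoveringNumber ((κ + L * ε) * R) (U '' S)
    _ = externalCoveringNumber (κ * R + 1 * (L * R * ε)) (U '' S) := by congr 1; ring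
    _ ≤ externalCoveringNumber (1 * (L * R * ε))
          ((· + 𝓛 v) '' (ι '' closedBall (C v) ↑(L * R))) :=
      externalCoveringNumber_add_le_of_isCover hcover
    _ ≤ externalCoveringNumber (L * R * ε) (ι '' closedBall (C v) ↑(L * R)) :=
      externalCoveringNumber_image_le_of_lipschitzWith (isometry_add_right (𝓛 v)).lipschitz _ _
    _ ≤ externalCoveringNumber ε (ι '' closedBall 0 1) :=
      externalCoveringNumber_image_closedBall_le ι (C v) (L * R) ε

theorem externalCoveringNumber_image_le (hU : IsAdmissibleOn ι L κ 𝔹 U) (ε : ℝ≥0) {V : Finset X}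
    (hS : S ⊆ 𝔹) (hV : ↑V ⊆ 𝔹) (hSV : IsCover R S (V : Set X)) :
    externalCoveringNumber ((κ + L * ε) * R) (U '' S) ≤
      V.card * externalCoveringNumber ε (ι '' closedBall 0 1) := by
  have hsub : U '' S ⊆ ⋃ v ∈ V, U '' (S ∩ closedBall v R) := by
    rintro _ ⟨x, hx, rfl⟩
    obtain ⟨v, hv, hxv⟩ := isCover_iff_forall_exists_dist_le.1 hSV x hx
    exact mem_biUnion hv (mem_image_of_mem U ⟨hx, hxv⟩)
  calc externalCoveringNumber ((κ + L * ε) * R) (U '' S)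
    _ ≤ externalCoveringNumber ((κ + L * ε) * R) (⋃ v ∈ V, U '' (S ∩ closedBall v R)) :=
      externalCoveringNumber_mono_set hsub
    _ ≤ ∑ v ∈ V, externalCoveringNumber ((κ + L * ε) * R) (U '' (S ∩ closedBall v R)) :=
      externalCoveringNumber_biUnion_le V _
    _ ≤ ∑ _v ∈ V, externalCoveringNumber ε (ι '' closedBall 0 1) :=
      Finset.sum_le_sum fun v hv ↦ hU.externalCoveringNumber_image_le_of_subset_closedBall ε
        (inter_subset_left.trans hS) (hV hv) inter_subset_right
    _ = V.card * externalCoveringNumber ε (ι '' closedBall 0 1) := by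
      rw [Finset.sum_const, nsmul_eq_mul]

theorem coveringNumber_image_le (hU : IsAdmissibleOn ι L κ 𝔹 U) (ε : ℝ≥0) {V : Finset X}
    (hS : S ⊆ 𝔹) (hV : ↑V ⊆ 𝔹) (hSV : IsCover R S (V : Set X)) :
    coveringNumber (2 * (κ + L * ε) * R) (U '' S) ≤
      V.card * externalCoveringNumber ε (ι '' closedBall 0 1) := by
  rw [mul_assoc]
  exact (coveringNumber_two_mul_le_externalCoveringNumber _ _).trans
    (hU.externalCoveringNumber_image_le ε hS hV hSV)

end IsAdmissibleOn

theorem net_refinement_of_admissible_map_general (ι : E →ₗ[ℝ] F) {κ L ε R : ℝ} (hκ : 0 ≤ κ)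
    (hL : 0 ≤ L) (hε : 0 ≤ ε) (hR : 0 ≤ R) {N : ℕ} {y : Fin N → F}
    (hN : ι '' closedBall 0 1 ⊆ ⋃ i, closedBall (y i) ε)
    {𝔹 : Set X} {U : X → F} {C : X → E} {𝓛 : X → F} (hU : ∀ x ∈ 𝔹, U x = ι (C x) + 𝓛 x)
    (hC : ∀ ξ₁ ∈ 𝔹, ∀ ξ₂ ∈ 𝔹, dist (C ξ₁) (C ξ₂) ≤ L * dist ξ₁ ξ₂)
    (h𝓛 : ∀ ξ₁ ∈ 𝔹, ∀ ξ₂ ∈ 𝔹, dist (𝓛 ξ₁) (𝓛 ξ₂) ≤ κ * dist ξ₁ ξ₂)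
    {S V : Set X} (hS : S ⊆ 𝔹) (hVfin : V.Finite) (hV : V ⊆ 𝔹)
    (hSV : ∀ x ∈ S, ∃ v ∈ V, dist x v ≤ R) :
    ∃ V' : Set F, V' ⊆ U '' S ∧ V'.Finite ∧ V'.ncard ≤ N * V.ncard ∧
      ∀ z ∈ U '' S, ∃ v ∈ V', dist z v ≤ 2 * (κ + L * ε) * R := by
  lift κ to ℝ≥0 using hκ
  lift L to ℝ≥0 using hL
  lift ε to ℝ≥0 using hε
  lift R to ℝ≥0 using hR
  lift V to Finset X using hVfin
  have hadm : IsAdmissibleOn ι L κ 𝔹 U :=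
    ⟨C, 𝓛, .of_dist_le_mul hC, .of_dist_le_mul h𝓛, hU⟩
  have hball : externalCoveringNumber ε (ι '' closedBall 0 1) ≤ N := by
    simpa using externalCoveringNumber_le_card_of_subset_iUnion_closedBall hN
  have hnum : coveringNumber (2 * (κ + L * ε) * R) (U '' S) ≤ ↑(N * V.card) :=
    calc coveringNumber (2 * (κ + L * ε) * R) (U '' S)
      _ ≤ V.card * externalCoveringNumber ε (ι '' closedBall 0 1) :=
        hadm.coveringNumber_image_le ε hS hV (isCover_iff_forall_exists_dist_le.2 hSV)
      _ ≤ V.card * N := by gcongr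
      _ = ↑(N * V.card) := by rw [mul_comm, Nat.cast_mul]
  obtain ⟨V', hV'S, hV'fin, hV', hcard⟩ :=
    exists_set_encard_eq_coveringNumber (ne_top_of_le_ne_top (ENat.natCast_ne_top _) hnum)
  refine ⟨V', hV'S, hV'fin, ?_, mod_cast isCover_iff_forall_exists_dist_le.1 hV'⟩
  rw [ncard_coe_finset, ← Nat.cast_le (α := ℕ∞), hV'fin.cast_ncard_eq, hcard]
  exact hnum

end Admissible

/-- One covering step of the exponential attractor construction.
Given a compact operator `ι : X₁ → X₀`, constants `0 ≤ κ < 1/2`, `L > 0`, and `N` closed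
balls of radius `(1 - 2κ)/(4L)` covering `ι`(unit ball of `X₁`), and an admissible map
`U = ι ∘ C + 𝓛` on `𝔹 ⊆ X₀`, then any `R'`-net `V ⊆ 𝔹` of a set `S ⊆ 𝔹` can be refined to
a `(κ + 1/2)·R'`-net `V' ⊆ U(S)` of `U(S)` with `card V' ≤ N · card V`. -/
theorem net_refinement_of_admissible_map
    (X₀ X₁ : Type*) [NormedAddCommGroup X₀] [NormedSpace ℝ X₀] [CompleteSpace X₀]
    [NormedAddCommGroup X₁] [NormedSpace ℝ X₁] [CompleteSpace X₁]
    (ι : X₁ →L[ℝ] X₀) (hι : IsCompactOperator ι)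
    (κ L : ℝ) (hκ0 : 0 ≤ κ) (hκ : κ < 1/2) (hL : 0 < L)
    (N : ℕ) (y : Fin N → X₀)
    (hN : ι '' Metric.closedBall 0 1 ⊆ ⋃ i, Metric.closedBall (y i) ((1 - 2*κ)/(4*L)))
    (𝔹 : Set X₀) (U : X₀ → X₀) (C : X₀ → X₁) (𝓛 : X₀ → X₀)
    (hU : ∀ x ∈ 𝔹, U x = ι (C x) + 𝓛 x)
    (hC : ∀ ξ₁ ∈ 𝔹, ∀ ξ₂ ∈ 𝔹, ‖C ξ₁ - C ξ₂‖ ≤ L * ‖ξ₁ - ξ₂‖)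
    (h𝓛 : ∀ ξ₁ ∈ 𝔹, ∀ ξ₂ ∈ 𝔹, ‖𝓛 ξ₁ - 𝓛 ξ₂‖ ≤ κ * ‖ξ₁ - ξ₂‖)
    (S : Set X₀) (hS : S ⊆ 𝔹) (R' : ℝ) (hR' : 0 < R')
    (V : Set X₀) (hVfin : V.Finite) (hV𝔹 : V ⊆ 𝔹)
    (hVnet : ∀ x ∈ S, ∃ v ∈ V, ‖x - v‖ ≤ R') :
    ∃ V' : Set X₀, V' ⊆ U '' S ∧ V'.Finite ∧ V'.ncard ≤ N * V.ncard ∧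
      ∀ z ∈ U '' S, ∃ v ∈ V', ‖z - v‖ ≤ (κ + 1/2) * R' := by
  have hradius : κ + 1 / 2 = 2 * (κ + L * ((1 - 2 * κ) / (4 * L))) := by field_simp; ring
  simp only [← dist_eq_norm, hradius] at hC h𝓛 hVnet ⊢
  exact net_refinement_of_admissible_map_general ι.toLinearMap hκ0 hL.le
    (div_nonneg (by linarith) (by positivity)) hR'.le hN hU hC h𝓛 hS hVfin hV𝔹 hVnet
end

section
/- Let E be a real normed space, let P ⊆ E be a compact set, and let r ≥ 0. Suppose (x_n) is a sequence in E with inf_{p∈P} ‖x_n − p‖ ≤ r for every n, and suppose x_n converges to x ∈ E in the weak topology of E (i.e. ⟨f, x_n⟩ → ⟨f, x⟩ for every continuous linear functional f on E). Then inf_{p∈P} ‖x − p‖ ≤ r. -/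
/-!
Whenever `r < ε`, a point within distance `r` of a nonempty set `P` is a point of `P` plus a vector
of norm at most `ε`, so `{y | infDist y P ≤ r} = ⋂ ε > r, P + closedBall 0 ε`. By Hahn–Banach the
closed ball, being convex, is weakly closed, and its sum with a weakly compact set is again weakly
closed. Hence the distance to a weakly compact set is weakly lower semicontinuous, and a bound on it
survives weak limits.
-/

open Filter Metric Set Topology
open scoped Pointwise

section TopologicalModule

variable (𝕜 : Type*) {E : Type*}

theorem tendsto_toWeakSpace_iff [CommSemiring 𝕜] [TopologicalSpace 𝕜] [ContinuousAdd 𝕜]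
    [ContinuousConstSMul 𝕜 𝕜] [AddCommMonoid E] [Module 𝕜 E] [TopologicalSpace E]
    {ι : Type*} {l : Filter ι} {x : ι → E} {a : E} :
    Tendsto (fun i => toWeakSpace 𝕜 E (x i)) l (𝓝 (toWeakSpace 𝕜 E a)) ↔
      ∀ f : StrongDual 𝕜 E, Tendsto (fun i => f (x i)) l (𝓝 (f a)) :=
  (IsInducing.induced fun (y : WeakSpace 𝕜 E) (f : StrongDual 𝕜 E) =>
    f ((toWeakSpace 𝕜 E).symm y)).tendsto_nhds_iff.trans tendsto_pi_nhds

variable [RCLike 𝕜] [AddCommGroup E] [Module 𝕜 E] [Module ℝ E] [IsScalarTower ℝ 𝕜 E]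
  [TopologicalSpace E] [IsTopologicalAddGroup E] [ContinuousSMul 𝕜 E] [LocallyConvexSpace ℝ E]
  {s t : Set E}

theorem isClosed_toWeakSpace_image_of_convex (hs : Convex ℝ s) (hs' : IsClosed s) :
    IsClosed (toWeakSpace 𝕜 E '' s) := by
  rw [← closure_eq_iff_isClosed, ← hs.toWeakSpace_closure 𝕜, hs'.closure_eq]

theorem isClosed_toWeakSpace_image_add (hs : IsCompact (toWeakSpace 𝕜 E '' s))
    (ht : Convex ℝ t) (ht' : IsClosed t) : IsClosed (toWeakSpace 𝕜 E '' (s + t)) := by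
  rw [image_add]
  exact (isClosed_toWeakSpace_image_of_convex 𝕜 ht ht').add_left_of_isCompact hs

end TopologicalModule

theorem setOf_infDist_le_eq_iInter_add_closedBall {E : Type*} [SeminormedAddCommGroup E]
    {s : Set E} (hs : s.Nonempty) (r : ℝ) :
    {x | infDist x s ≤ r} = ⋂ (ε : ℝ) (_ : r < ε), s + closedBall 0 ε := by
  ext x
  simp only [mem_ofPred_eq, mem_iInter]
  constructor
  · intro hx ε hε
    obtain ⟨p, hp, hxp⟩ := (infDist_lt_iff hs).1 (hx.trans_lt hε)
    exact ⟨p, hp, x - p, by simpa [← dist_eq_norm] using hxp.le, add_sub_cancel p x⟩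
  · refine fun hx => le_of_forall_gt_imp_ge_of_dense fun ε hε => ?_
    obtain ⟨p, hp, v, hv, rfl⟩ := hx ε hε
    calc infDist (p + v) s ≤ dist (p + v) p := infDist_le_dist_of_mem hp
      _ = ‖v‖ := dist_self_add_left v p
      _ ≤ ε := mem_closedBall_zero_iff.1 hv

section SeminormedSpace

variable (𝕜 : Type*) {E : Type*} [RCLike 𝕜] [SeminormedAddCommGroup E] [NormedSpace 𝕜 E]

theorem lowerSemicontinuous_infDist_toWeakSpace_symm {s : Set E}
    (hs : IsCompact (toWeakSpace 𝕜 E '' s)) :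
    LowerSemicontinuous fun x => infDist ((toWeakSpace 𝕜 E).symm x) s := by
  obtain rfl | hne := s.eq_empty_or_nonempty
  · simpa only [infDist_empty] using lowerSemicontinuous_const
  let : NormedSpace ℝ E := .restrictScalars ℝ 𝕜 E
  have : IsScalarTower ℝ 𝕜 E := .of_algebraMap_smul fun _ _ => rfl
  refine lowerSemicontinuous_iff_isClosed_preimage.2 fun r => ?_
  suffices IsClosed (toWeakSpace 𝕜 E '' {x | infDist x s ≤ r}) by
    rwa [LinearEquiv.image_eq_preimage_symm] at this
  rw [setOf_infDist_le_eq_iInter_add_closedBall hne, image_iInter₂ (toWeakSpace 𝕜 E).bijective]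
  exact isClosed_biInter fun ε _ =>
    isClosed_toWeakSpace_image_add 𝕜 hs (convex_closedBall 0 ε) isClosed_closedBall

theorem infDist_le_of_weak_limit_general {P : Set E} (hP : IsCompact (toWeakSpace 𝕜 E '' P))
    {r : ℝ} {ι : Type*} {l : Filter ι} {x : ι → E} (hx : ∃ᶠ i in l, infDist (x i) P ≤ r)
    {xlim : E} (hconv : ∀ f : StrongDual 𝕜 E, Tendsto (fun i => f (x i)) l (𝓝 (f xlim))) :
    infDist xlim P ≤ r :=
  (lowerSemicontinuous_infDist_toWeakSpace_symm 𝕜 hP).isClosed_preimage r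
    |>.mem_of_frequently_of_tendsto hx ((tendsto_toWeakSpace_iff 𝕜).2 hconv)

end SeminormedSpace

/-- If `P ⊆ E` is compact, `r ≥ 0`, `(x n)` is a sequence with
`inf_{p ∈ P} ‖x n - p‖ ≤ r` for every `n`, and `x n` converges weakly to `xlim` (i.e.
`f (x n) → f xlim` for every continuous linear functional `f`), then
`inf_{p ∈ P} ‖xlim - p‖ ≤ r`. -/
theorem infDist_le_of_weak_limit
    (E : Type*) [NormedAddCommGroup E] [NormedSpace ℝ E]
    (P : Set E) (hP : IsCompact P) (r : ℝ) (hr : 0 ≤ r)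
    (x : ℕ → E) (hx : ∀ n, Metric.infDist (x n) P ≤ r)
    (xlim : E)
    (hconv : ∀ f : E →L[ℝ] ℝ,
      Filter.Tendsto (fun n => f (x n)) Filter.atTop (nhds (f xlim))) :
    Metric.infDist xlim P ≤ r :=
  infDist_le_of_weak_limit_general ℝ (hP.image (toWeakSpaceCLM ℝ E).continuous)
    (Frequently.of_forall hx) hconv
end
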